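/- Let (k,′) be a differential field of characteristic zero and α₀, α₁, α₂ ∈ k with α₂ ≠ 0. Assume the Riccati equation X′ = α₀ + α₁X + α₂X² has no solution in the algebraic closure k̄ of k (with its unique extended derivation). Let (M,′) be a differential field extension of (k,′) containing two distinct solutions λ₁, λ₂ of this Riccati equation (such solutions are necessarily transcendental over k). Then the equation Y′ = (α₁/2 + α₂λ₁)Y has no nonzero solution algebraic over k(λ₁,λ₂): in any differential field extension of (M,′), every solution that is algebraic over k(λ₁,λ₂) is zero. -/

import Mathlib

open scoped TensorProduct

/-- A derivation on a (possibly noncommutative) ring: an additive map satisfying the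
Leibniz rule. -/
structure IsRingDeriv {A : Type*} [Ring A] (d : A → A) : Prop where
  map_add : ∀ x y, d (x + y) = d x + d y
  leibniz : ∀ x y, d (x * y) = d x * y + x * d y

/-- The derivation `d` on the `k`-algebra `A` restricts to the derivation `δ` on `k`
(along `algebraMap k A`). -/
def RestrictsTo {k A : Type*} [CommRing k] [Ring A] [Algebra k A]
    (δ : k → k) (d : A → A) : Prop :=
  ∀ c : k, d (algebraMap k A c) = algebraMap k A (δ c)

/-!
A Darboux polynomial divides its own derivative. If `x′ = v(x)` has no solution algebraic over `K`,
then the derivation of `K[X]` with `X′ = v` has no nonconstant Darboux polynomial, because a root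
of an irreducible one would be such a solution. Hence a solution `x` in an extension is
transcendental, and an element `z` of `K(x)` with `z′ = r(x) z`, `r` a polynomial, lies in `K`.

Let `x₁ ≠ x₂` be solutions, where `v` is quadratic. Then `u = (x₂ - x₁)⁻¹` satisfies a linear
equation over `K(x₁)`. That equation has no solution in `K(x₁)`: a solution would be a polynomial
in `x₁`, which comparing top coefficients excludes. So the linear equation has no nonconstant
Darboux polynomial over `K(x₁)` either. If now `y ≠ 0` is algebraic over `K(x₁, x₂) = K(x₁)(u)` and
`y′ = r(x₁) y`, the norm `z` of `y` satisfies `z′ = n r(x₁) z` for some `n ≠ 0`. Thus `z` lies in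
`K(x₁)`, then in `K`, and `n r(x₁) = z′ / z` makes `r` constant since `x₁` is transcendental.
-/

open Polynomial IntermediateField Differential

section Derivation

variable {A : Type*} [CommRing A]

theorem prime_dvd_derivation_of_dvd [IsDomain A] [WfDvdMonoid A] [Algebra ℚ A]
    (D : Derivation ℤ A A) {p q : A} (hq : Prime q) (hp : p ≠ 0) (hqp : q ∣ p) (hpD : p ∣ D p) :
    q ∣ D q := by
  have hfin := FiniteMultiplicity.of_prime_left hq hp
  obtain ⟨u, hu, hqu⟩ := hfin.exists_eq_pow_mul_and_not_dvd
  obtain ⟨n, hn⟩ : ∃ n, multiplicity q p = n + 1 :=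
    Nat.exists_eq_succ_of_ne_zero (multiplicity_ne_zero.mpr hqp)
  rw [hn] at hu
  obtain ⟨w, hw⟩ := hpD
  have leibniz : D p = q ^ n * ((n + 1 : ℕ) * D q * u) + q ^ n * (q * D u) := by
    rw [hu, D.leibniz, D.leibniz_pow]
    simp only [smul_eq_mul, nsmul_eq_mul, Nat.add_sub_cancel]
    ring
  have cancelled : ((n + 1 : ℕ) : A) * D q * u = q * (u * w - D u) := by
    refine mul_left_cancel₀ (pow_ne_zero n hq.ne_zero) ?_
    linear_combination hw - leibniz + w * hu
  have hunit : IsUnit ((n + 1 : ℕ) : A) := by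
    simpa using (Nat.cast_add_one_ne_zero (R := ℚ) n).isUnit.map (algebraMap ℚ A)
  have hdvd := (hq.dvd_or_dvd ⟨_, cancelled⟩).resolve_right hqu
  exact (hunit.dvd_mul_left).mp hdvd

variable [Differential A]

theorem coeff_implicitDeriv (v p : A[X]) (i : ℕ) :
    (implicitDeriv v p).coeff i = (p.coeff i)′ + (v * derivative p).coeff i := rfl

theorem coeff_implicitDeriv_linear (r s : A) (p : A[X]) (i : ℕ) :
    (implicitDeriv (C r * X + C s) p).coeff i =
      (p.coeff i)′ + i * r * p.coeff i + (i + 1) * s * p.coeff (i + 1) := by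
  rw [coeff_implicitDeriv, add_mul, mul_assoc, coeff_add, coeff_C_mul, coeff_C_mul,
    coeff_derivative]
  cases i with
  | zero => simp
  | succ i => rw [coeff_X_mul, coeff_derivative]; push_cast; ring

theorem implicitDeriv_linear_eq_of_monic_of_dvd {r s : A} {p : A[X]} (hp : p.Monic)
    (hdvd : p ∣ implicitDeriv (C r * X + C s) p) :
    implicitDeriv (C r * X + C s) p = C (p.natDegree * r) * p := by
  have hcoeff : ∀ i, p.natDegree < i → p.coeff i = 0 := fun i hi ↦
    coeff_eq_zero_of_natDegree_lt hi
  have hdeg : (implicitDeriv (C r * X + C s) p).natDegree ≤ p.natDegree := by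
    rw [natDegree_le_iff_coeff_eq_zero]
    intro i hi
    simp [coeff_implicitDeriv_linear, hcoeff i hi, hcoeff (i + 1) (by lia)]
  have hlead := coeff_implicitDeriv_linear r s p p.natDegree
  rw [eq_leadingCoeff_mul_of_monic_of_dvd_of_natDegree_le hp hdvd hdeg] at hlead ⊢
  congr 2
  simpa [hp, hcoeff] using hlead

theorem coeff_implicitDeriv_natDegree_add_one {v : A[X]} (hv : v.natDegree ≤ 2) (p : A[X]) :
    (implicitDeriv v p).coeff (p.natDegree + 1) = v.coeff 2 * (p.natDegree * p.leadingCoeff) := by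
  rw [coeff_implicitDeriv, coeff_eq_zero_of_natDegree_lt (Nat.lt_succ_self _), map_zero, zero_add]
  rcases Nat.eq_zero_or_pos p.natDegree with hp | hp
  · simp [hp, derivative_of_natDegree_zero hp]
  · obtain ⟨n, hn⟩ := Nat.exists_eq_succ_of_ne_zero hp.ne'
    have hdeg : (derivative p).natDegree ≤ n := by
      have := natDegree_derivative_le p
      lia
    rw [show p.natDegree + 1 = 2 + n by lia, coeff_mul_add_eq_of_natDegree_le hv hdeg,
      coeff_derivative, leadingCoeff, hn]
    push_cast
    ring

/- For `p ≠ 0` of degree `n`, the coefficients at degree `n + 1` would give `n * v₂ = -2 * v₂`,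
where `v₂ = v.coeff 2`. -/
theorem implicitDeriv_ne_neg_derivative_mul_sub [IsDomain A] [CharZero A] {v : A[X]}
    (hv : v.natDegree = 2) (p : A[X]) :
    implicitDeriv v p ≠ -derivative v * p - C (v.coeff 2) := by
  intro h
  have hv2 : v.coeff 2 ≠ 0 := by
    rw [← hv, ← leadingCoeff, leadingCoeff_ne_zero]
    rintro rfl
    simp at hv
  have hv' : (derivative v).natDegree ≤ 1 := (natDegree_derivative_le v).trans (by lia)
  have htop := congrArg (coeff · (p.natDegree + 1)) h
  simp only [coeff_implicitDeriv_natDegree_add_one hv.le, coeff_sub, neg_mul, coeff_neg,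
    coeff_C_succ, sub_zero] at htop
  rw [add_comm, coeff_mul_add_eq_of_natDegree_le hv' le_rfl, coeff_derivative,
    coeff_natDegree] at htop
  have hlead : v.coeff 2 * ((p.natDegree + 2 : ℕ) : A) * p.leadingCoeff = 0 := by
    push_cast at htop ⊢
    linear_combination htop
  have hp : p = 0 := by simpa [hv2, -Nat.cast_add, Nat.cast_ne_zero] using hlead
  simp [hp, hv2] at h

end Derivation

theorem aeval_quadratic {R S : Type*} [CommRing R] [CommRing S] [Algebra R S] (a b c : R) (x : S) :
    aeval x (C c * X ^ 2 + C b * X + C a) =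
      algebraMap R S a + algebraMap R S b * x + algebraMap R S c * x ^ 2 := by
  simp only [map_add, map_mul, map_pow, aeval_C, aeval_X]
  ring

theorem aeval_sub_aeval_of_natDegree_le_two {R S : Type*} [CommRing R] [CommRing S] [Algebra R S]
    {v : R[X]} (hv : v.natDegree ≤ 2) (x y : S) :
    aeval y v - aeval x v =
      aeval x (derivative v) * (y - x) + algebraMap R S (v.coeff 2) * (y - x) ^ 2 := by
  have hquad := eq_quadratic_of_degree_le_two (natDegree_le_iff_degree_le.mp hv)
  have heval (t : S) : aeval t v = algebraMap R S (v.coeff 0) + algebraMap R S (v.coeff 1) * t +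
      algebraMap R S (v.coeff 2) * t ^ 2 :=
    (congrArg (aeval t) hquad).trans (aeval_quadratic _ _ _ t)
  have hderiv : aeval x (derivative v) =
      algebraMap R S (v.coeff 2) * 2 * x + algebraMap R S (v.coeff 1) := by
    conv_lhs => rw [hquad]
    simp [derivative_C_mul_X_sq, derivative_C_mul_X, -derivative_mul, map_ofNat (algebraMap R S)]
  rw [heval, heval, hderiv]
  ring

theorem deriv_inv_sub {K L : Type*} [Field K] [Field L] [Differential L] [Algebra K L]
    {v : K[X]} (hv : v.natDegree ≤ 2) {x y : L} (hx : x′ = aeval x v) (hy : y′ = aeval y v)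
    (hxy : x ≠ y) :
    (y - x)⁻¹′ = -aeval x (derivative v) * (y - x)⁻¹ - algebraMap K L (v.coeff 2) := by
  have hne : y - x ≠ 0 := sub_ne_zero.mpr hxy.symm
  rw [Derivation.leibniz_inv, map_sub, hx, hy, aeval_sub_aeval_of_natDegree_le_two hv]
  simp only [smul_eq_mul]
  field_simp
  ring

/-- A polynomial `v` is Darboux-free if the derivation of `K[X]` that extends the one of `K` and
satisfies `X′ = v` has no nonconstant Darboux polynomial, that is, no nonconstant polynomial
dividing its own derivative. The zero polynomial counts as constant, its `natDegree` being `0`. -/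
def DarbouxFree {K : Type*} [CommRing K] [Differential K] (v : K[X]) : Prop :=
  ∀ p : K[X], p ∣ implicitDeriv v p → p.natDegree = 0

namespace DarbouxFree

section Criteria

variable {K : Type*} [Field K] [CharZero K] [Differential K]

theorem of_monic_irreducible {v : K[X]}
    (h : ∀ q : K[X], q.Monic → Irreducible q → ¬ q ∣ implicitDeriv v q) : DarbouxFree v := by
  intro p hpD
  by_contra hp
  have hp_unit : ¬ IsUnit p := fun hu ↦ hp (natDegree_eq_zero_of_isUnit hu)
  obtain ⟨q, hq_monic, hq, hqp⟩ := exists_monic_irreducible_factor p hp_unit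
  have hp0 : p ≠ 0 := ne_zero_of_natDegree_gt (Nat.pos_of_ne_zero hp)
  exact h q hq_monic hq (prime_dvd_derivation_of_dvd _ hq.prime hp0 hqp hpD)

theorem of_isAlgClosed (L : Type*) [Field L] [IsAlgClosed L] [Differential L] [Algebra K L]
    [DifferentialAlgebra K L] {v : K[X]} (h : ∀ x : L, x′ ≠ aeval x v) : DarbouxFree v := by
  refine of_monic_irreducible fun q _ hq hqD ↦ ?_
  obtain ⟨x, hx⟩ := IsAlgClosed.exists_aeval_eq_zero L q (degree_pos_of_irreducible hq).ne'
  have hsep : aeval x (derivative q) ≠ 0 := hq.separable.aeval_derivative_ne_zero hx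
  have hderiv : aeval x (implicitDeriv v q) = 0 := aeval_eq_zero_of_dvd_aeval_eq_zero hqD hx
  have hchain := deriv_aeval_eq x q
  refine h x (mul_left_cancel₀ hsep ?_)
  simp only [implicitDeriv, Derivation.add_apply, Derivation.smul_apply, smul_eq_mul, map_add,
    map_mul, Derivation.restrictScalars_apply, derivative'_apply] at hderiv
  rw [hx, map_zero] at hchain
  linear_combination -hchain - hderiv

/- In a monic Darboux polynomial of degree `n`, the coefficient of `X ^ (n - 1)`, divided by
`-n`, is a solution in `K`. -/
theorem linear {r s : K} (h : ∀ a : K, a′ ≠ r * a + s) : DarbouxFree (C r * X + C s) := by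
  refine of_monic_irreducible fun q hq_monic hq hqD ↦ ?_
  obtain ⟨n, hn⟩ := Nat.exists_eq_succ_of_ne_zero hq.natDegree_pos.ne'
  have hcoeff := coeff_implicitDeriv_linear r s q n
  have hlead : q.coeff (n + 1) = 1 := by rw [← Nat.succ_eq_add_one, ← hn, hq_monic.coeff_natDegree]
  rw [implicitDeriv_linear_eq_of_monic_of_dvd hq_monic hqD, coeff_C_mul, hn, hlead] at hcoeff
  have hderiv : (q.coeff n)′ = r * q.coeff n - (n + 1) * s := by
    push_cast at hcoeff
    linear_combination -hcoeff
  refine h (-q.coeff n / (n + 1 : ℕ)) ?_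
  rw [Derivation.leibniz_div, map_neg, hderiv, Derivation.map_natCast]
  simp only [Nat.cast_add, Nat.cast_one, inv_pow, neg_sub, smul_eq_mul, mul_zero, sub_zero]
  field_simp
  ring

end Criteria

end DarbouxFree

section Restriction

variable {K L : Type*} [Field K] [Field L] [Algebra K L] [Differential L]

/-- The derivation of `L` restricted to an intermediate field that it preserves, which makes that
field a differential field in its own right. It is not an instance, because it depends on the
proof `hE` of stability. -/
abbrev restrictedDifferential (E : IntermediateField K L) (hE : ∀ z ∈ E, z′ ∈ E) :
    Differential E where
  deriv := Derivation.mk' (AddMonoidHom.mk' (fun z : E ↦ (⟨(z : L)′, hE z z.2⟩ : E))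
    fun _ _ ↦ Subtype.ext (map_add _ _ _)).toIntLinearMap
    fun _ _ ↦ Subtype.ext (Derivation.leibniz _ _ _)

theorem differentialAlgebra_restrictedDifferential (E : IntermediateField K L)
    (hE : ∀ z ∈ E, z′ ∈ E) :
    letI := restrictedDifferential E hE
    DifferentialAlgebra E L :=
  letI := restrictedDifferential E hE
  ⟨fun _ ↦ rfl⟩

end Restriction

section Extension

variable {K L : Type*} [Field K] [Field L] [Differential K] [Differential L] [Algebra K L]
  [DifferentialAlgebra K L]

theorem deriv_mem_adjoin {S : Set L} (hS : ∀ x ∈ S, x′ ∈ adjoin K S) {z : L}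
    (hz : z ∈ adjoin K S) : z′ ∈ adjoin K S := by
  induction hz using adjoin_induction with
  | mem x hx => exact hS x hx
  | algebraMap a => rw [deriv_algebraMap]; exact (adjoin K S).algebraMap_mem _
  | add x y _ _ hx' hy' => rw [map_add]; exact add_mem hx' hy'
  | inv x hx hx' =>
    rw [Derivation.leibniz_inv]
    exact mul_mem (neg_mem (pow_mem (inv_mem hx) 2)) hx'
  | mul x y hx hy hx' hy' =>
    rw [Derivation.leibniz]
    exact add_mem (mul_mem hx hy') (mul_mem hy hx')

theorem deriv_mem_adjoin_simple {v : K[X]} {x : L} (hx : x′ = aeval x v) {z : L} (hz : z ∈ K⟮x⟯) :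
    z′ ∈ K⟮x⟯ := by
  refine deriv_mem_adjoin ?_ hz
  rintro _ rfl
  exact hx ▸ algebra_adjoin_le_adjoin K _ (aeval_mem_adjoin_singleton K _)

/- The constant coefficient of the minimal polynomial is, up to sign, the product of the `n`
conjugates of `y`, each of which satisfies the equation of `y`. -/
theorem exists_deriv_eq_natCast_mul_of_isAlgebraic {y : L} {h : K} (hy : IsAlgebraic K y)
    (hy0 : y ≠ 0) (hderiv : y′ = algebraMap K L h * y) :
    ∃ n : ℕ, n ≠ 0 ∧ ∃ z : K, z ≠ 0 ∧ z′ = n * h * z := by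
  have hmonic := minpoly.monic hy.isIntegral
  have hdvd : minpoly K y ∣ implicitDeriv (C h * X + C 0) (minpoly K y) := by
    refine minpoly.dvd K y ?_
    rw [← deriv_aeval_eq_implicitDeriv y _ (by simpa using hderiv), minpoly.aeval, map_zero]
  refine ⟨(minpoly K y).natDegree, (minpoly.natDegree_pos hy.isIntegral).ne',
    (minpoly K y).coeff 0, minpoly.coeff_zero_ne_zero hy.isIntegral hy0, ?_⟩
  have hcoeff := coeff_implicitDeriv_linear h 0 (minpoly K y) 0
  rw [implicitDeriv_linear_eq_of_monic_of_dvd hmonic hdvd, coeff_C_mul] at hcoeff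
  simpa using hcoeff.symm

end Extension

theorem restrictScalars_adjoin_inv_sub {K L : Type*} [Field K] [Field L] [Algebra K L] (x y : L) :
    K⟮x⟯⟮(y - x)⁻¹⟯.restrictScalars K = K⟮x, y⟯ := by
  rw [← adjoin_simple_adjoin_simple]
  congr 1
  have hx : ∀ E : IntermediateField K⟮x⟯ L, x ∈ E := fun E ↦
    E.algebraMap_mem (AdjoinSimple.gen K x)
  apply le_antisymm <;> rw [adjoin_simple_le_iff]
  · exact inv_mem (sub_mem (mem_adjoin_simple_self _ y) (hx _))
  · simpa using add_mem (inv_mem (mem_adjoin_simple_self K⟮x⟯ (y - x)⁻¹)) (hx _)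

namespace DarbouxFree

variable {K L : Type*} [Field K] [Field L] [Differential K] [Differential L] [Algebra K L]
  [DifferentialAlgebra K L] {v : K[X]} {x : L}

theorem transcendental (hv : DarbouxFree v) (hx : x′ = aeval x v) : Transcendental K x := by
  intro halg
  refine (minpoly.natDegree_pos halg.isIntegral).ne' (hv _ (minpoly.dvd K x ?_))
  rw [← deriv_aeval_eq_implicitDeriv x v hx, minpoly.aeval, map_zero]

theorem exists_aeval_eq_of_deriv_eq (hv : DarbouxFree v) (hx : x′ = aeval x v) {z : L}
    (hz : z ∈ K⟮x⟯) {r s : K[X]} (hderiv : z′ = aeval x r * z + aeval x s) :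
    ∃ p : K[X], aeval x p = z := by
  have hinj := transcendental_iff_injective.mp (hv.transcendental hx)
  obtain ⟨f, g, hfg⟩ := (mem_adjoin_simple_iff K z).mp hz
  obtain rfl | hg := eq_or_ne g 0
  · exact ⟨0, by simp [hfg]⟩
  obtain ⟨q, p, c, hqp, rfl, rfl⟩ := UniqueFactorizationMonoid.exists_reduced_factors g hg f
  obtain ⟨hc, hq⟩ := mul_ne_zero_iff.mp hg
  have hne : ∀ w : K[X], w ≠ 0 → aeval x w ≠ 0 := fun w hw ↦
    (map_ne_zero_iff _ hinj).mpr hw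
  have hzq : z * aeval x q = aeval x p := by
    rw [hfg, map_mul, map_mul, mul_div_mul_left _ _ (hne c hc), div_mul_cancel₀ _ (hne q hq)]
  have hleibniz : implicitDeriv v p * q = (r * p + s * q) * q + p * implicitDeriv v q := by
    apply hinj
    have h := congrArg (·′) hzq
    simp only [Derivation.leibniz, smul_eq_mul, deriv_aeval_eq_implicitDeriv x v hx, hderiv] at h
    simp only [map_mul, map_add, ← h, ← hzq]
    ring
  have hqD : q ∣ implicitDeriv v q := hqp.dvd_of_dvd_mul_left
    ⟨implicitDeriv v p - (r * p + s * q), by linear_combination -hleibniz⟩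
  obtain ⟨a, rfl⟩ := natDegree_eq_zero.mp (hv q hqD)
  have ha : algebraMap K L a ≠ 0 := by simpa using hne _ hq
  refine ⟨p * C a⁻¹, ?_⟩
  rw [map_mul, ← hzq, aeval_C, aeval_C, map_inv₀, mul_inv_cancel_right₀ ha]

theorem exists_algebraMap_eq_of_deriv_eq_mul (hv : DarbouxFree v) (hx : x′ = aeval x v) {z : L}
    (hz : z ∈ K⟮x⟯) {r : K[X]} (hderiv : z′ = aeval x r * z) : ∃ a : K, algebraMap K L a = z := by
  obtain ⟨p, rfl⟩ := hv.exists_aeval_eq_of_deriv_eq hx hz (s := 0) (by simpa using hderiv)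
  have hinj := transcendental_iff_injective.mp (hv.transcendental hx)
  have hpD : implicitDeriv v p = r * p :=
    hinj (by rw [← deriv_aeval_eq_implicitDeriv x v hx, hderiv, map_mul])
  obtain ⟨a, rfl⟩ := natDegree_eq_zero.mp (hv p (hpD ▸ dvd_mul_left p r))
  exact ⟨a, (aeval_C x a).symm⟩

theorem natDegree_eq_zero_of_deriv_eq_mul (hv : DarbouxFree v) (hx : x′ = aeval x v) {z : L}
    (hz : z ∈ K⟮x⟯) (hz0 : z ≠ 0) {r : K[X]} (hderiv : z′ = aeval x r * z) : r.natDegree = 0 := by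
  obtain ⟨a, rfl⟩ := hv.exists_algebraMap_eq_of_deriv_eq_mul hx hz hderiv
  have hinj := transcendental_iff_injective.mp (hv.transcendental hx)
  have ha : a ≠ 0 := by rintro rfl; simp at hz0
  have hr : r * C a = C a′ := hinj (by simpa [deriv_algebraMap] using hderiv.symm)
  rw [← natDegree_mul_C ha, hr, natDegree_C]

theorem exists_deriv_eq_natCast_mul (hv : DarbouxFree v) (hx : x′ = aeval x v) {y : L} {h : K}
    (hy : IsAlgebraic K⟮x⟯ y) (hy0 : y ≠ 0) (hderiv : y′ = algebraMap K L h * y) :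
    ∃ n : ℕ, n ≠ 0 ∧ ∃ a : K, a ≠ 0 ∧ a′ = n * h * a := by
  let := restrictedDifferential K⟮x⟯ fun _ ↦ deriv_mem_adjoin_simple hx
  have := differentialAlgebra_restrictedDifferential K⟮x⟯ fun _ ↦ deriv_mem_adjoin_simple hx
  obtain ⟨n, hn, ⟨z, hz⟩, hz0, hzderiv⟩ :=
    exists_deriv_eq_natCast_mul_of_isAlgebraic (h := algebraMap K K⟮x⟯ h) hy hy0 hderiv
  have hzL : z′ = n * algebraMap K L h * z := congrArg Subtype.val hzderiv
  obtain ⟨a, rfl⟩ := hv.exists_algebraMap_eq_of_deriv_eq_mul hx hz (r := C (n * h))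
    (by simpa using hzL)
  refine ⟨n, hn, a, by rintro rfl; exact hz0 (Subtype.ext (map_zero _)),
    (algebraMap K L).injective ?_⟩
  simpa [deriv_algebraMap] using hzL

theorem deriv_ne_neg_derivative_mul_sub [CharZero K] (hv : DarbouxFree v) (hdeg : v.natDegree = 2)
    (hx : x′ = aeval x v) {z : L} (hz : z ∈ K⟮x⟯) :
    z′ ≠ -aeval x (derivative v) * z - algebraMap K L (v.coeff 2) := by
  intro hderiv
  obtain ⟨p, rfl⟩ := hv.exists_aeval_eq_of_deriv_eq hx hz (r := -derivative v)
    (s := -C (v.coeff 2)) (by simpa [sub_eq_add_neg] using hderiv)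
  refine implicitDeriv_ne_neg_derivative_mul_sub hdeg p
    (transcendental_iff_injective.mp (hv.transcendental hx) ?_)
  simpa [deriv_aeval_eq_implicitDeriv x v hx] using hderiv

end DarbouxFree

theorem stmt_2_general {K Kb L : Type*} [Field K] [CharZero K] [Differential K]
    [Field Kb] [IsAlgClosed Kb] [Differential Kb] [Algebra K Kb] [DifferentialAlgebra K Kb]
    [Field L] [Differential L] [Algebra K L] [DifferentialAlgebra K L]
    {v : K[X]} (hdeg : v.natDegree = 2) (hno : ∀ x : Kb, x′ ≠ aeval x v)
    {x₁ x₂ : L} (hne : x₁ ≠ x₂) (hx₁ : x₁′ = aeval x₁ v) (hx₂ : x₂′ = aeval x₂ v)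
    {r : K[X]} (hr : r.natDegree ≠ 0) {y : L} (hy : y′ = aeval x₁ r * y)
    (halg : IsAlgebraic K⟮x₁, x₂⟯ y) : y = 0 := by
  by_contra hy0
  have hv : DarbouxFree v := .of_isAlgClosed Kb hno
  let := restrictedDifferential K⟮x₁⟯ fun _ ↦ deriv_mem_adjoin_simple hx₁
  have := differentialAlgebra_restrictedDifferential K⟮x₁⟯ fun _ ↦ deriv_mem_adjoin_simple hx₁
  let g := AdjoinSimple.gen K x₁
  let w : K⟮x₁⟯[X] := C (-aeval g (derivative v)) * X + C (-algebraMap K K⟮x₁⟯ (v.coeff 2))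
  have hw : DarbouxFree w :=
    .linear fun a ha ↦ hv.deriv_ne_neg_derivative_mul_sub hdeg hx₁ a.2 <| by
      simpa [g, sub_eq_add_neg] using
        (deriv_algebraMap a).trans (congrArg (algebraMap K⟮x₁⟯ L) ha)
  have hu : (x₂ - x₁)⁻¹′ = aeval (x₂ - x₁)⁻¹ w := by
    rw [deriv_inv_sub hdeg.le hx₁ hx₂ hne]
    simp [g, w, sub_eq_add_neg]
  rw [← restrictScalars_adjoin_inv_sub] at halg
  obtain ⟨n, hn, a, ha0, ha⟩ := hw.exists_deriv_eq_natCast_mul hu (h := aeval g r) halg hy0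
    (by simpa [g] using hy)
  have hnr : (C (n : K) * r).natDegree = 0 :=
    hv.natDegree_eq_zero_of_deriv_eq_mul hx₁ a.2 (by simpa using ha0)
      (by simpa [g] using (deriv_algebraMap a).trans (congrArg (algebraMap K⟮x₁⟯ L) ha))
  rw [natDegree_C_mul (Nat.cast_ne_zero.mpr hn)] at hnr
  exact hr hnr

/-- The derivation `d` as a differential ring structure, which gives access to the library of
differential algebra. -/
abbrev IsRingDeriv.differential {A : Type*} [CommRing A] {d : A → A} (hd : IsRingDeriv d) :
    Differential A where
  deriv := Derivation.mk' (AddMonoidHom.mk' d hd.map_add).toIntLinearMap fun a b ↦ by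
    simp [hd.leibniz, mul_comm, add_comm]

theorem RestrictsTo.trans {A B C : Type*} [CommRing A] [CommRing B] [Ring C] [Algebra A B]
    [Algebra A C] [Algebra B C] [IsScalarTower A B C] {dA : A → A} {dB : B → B} {dC : C → C}
    (hAB : RestrictsTo dA dB) (hBC : RestrictsTo dB dC) : RestrictsTo dA dC := fun a ↦ by
  rw [IsScalarTower.algebraMap_apply A B C, hBC, hAB, ← IsScalarTower.algebraMap_apply]

/-- If the Riccati equation `X′ = α₀ + α₁X + α₂X²` (`α₂ ≠ 0`) has no
solution in the algebraic closure of `k`, and `λ₁ ≠ λ₂` are solutions in a differential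
field extension `M` of `k`, then `Y′ = (α₁/2 + α₂λ₁)Y` has no nonzero solution algebraic
over `k(λ₁, λ₂)` in any differential field extension of `M`. -/
theorem stmt_2 (k : Type*) [Field k] [CharZero k]
    (δk : k → k) (hδk : IsRingDeriv δk)
    (α₀ α₁ α₂ : k) (hα₂ : α₂ ≠ 0)
    (kb : Type*) [Field kb] [Algebra k kb] [IsAlgClosure k kb]
    (δkb : kb → kb) (hδkb : IsRingDeriv δkb) (hreskb : RestrictsTo δk δkb)
    (hnosol : ∀ x : kb,
      δkb x ≠ algebraMap k kb α₀ + algebraMap k kb α₁ * x + algebraMap k kb α₂ * x ^ 2)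
    (M : Type*) [Field M] [Algebra k M]
    (δM : M → M) (hδM : IsRingDeriv δM) (hresM : RestrictsTo δk δM)
    (l₁ l₂ : M) (hne : l₁ ≠ l₂)
    (hl₁ : δM l₁ = algebraMap k M α₀ + algebraMap k M α₁ * l₁ + algebraMap k M α₂ * l₁ ^ 2)
    (hl₂ : δM l₂ = algebraMap k M α₀ + algebraMap k M α₁ * l₂ + algebraMap k M α₂ * l₂ ^ 2)
    (N : Type*) [Field N] [Algebra k N] [Algebra M N] [IsScalarTower k M N]
    (δN : N → N) (hδN : IsRingDeriv δN) (hresN : RestrictsTo δM δN)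
    (y : N)
    (hy : δN y = (algebraMap k N (α₁ / 2) + algebraMap k N α₂ * algebraMap M N l₁) * y)
    (halg : IsAlgebraic
      ↥(IntermediateField.adjoin k {algebraMap M N l₁, algebraMap M N l₂}) y) :
    y = 0 := by
  let := hδk.differential
  let := hδkb.differential
  let := hδN.differential
  have : DifferentialAlgebra k kb := ⟨hreskb⟩
  have : DifferentialAlgebra k N := ⟨hresM.trans hresN⟩
  have : IsAlgClosed kb := IsAlgClosure.isAlgClosed k
  have hsol {l : M} (hl : δM l = algebraMap k M α₀ + algebraMap k M α₁ * l +
      algebraMap k M α₂ * l ^ 2) : (algebraMap M N l)′ =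
        aeval (algebraMap M N l) (C α₂ * X ^ 2 + C α₁ * X + C α₀) := by
    rw [aeval_algebraMap_apply, aeval_quadratic, ← hl]
    exact hresN l
  exact stmt_2_general (natDegree_quadratic hα₂)
    (fun x : kb ↦ by rw [aeval_quadratic]; exact hnosol x)
    ((algebraMap M N).injective.ne hne) (hsol hl₁) (hsol hl₂)
    (r := C α₂ * X + C (α₁ / 2)) (by simp [natDegree_linear hα₂])
    (hy.trans (by simp [add_comm])) halg
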